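/- Let m ≥ 3 be an integer, let (a_α)_{1 ≤ |α| ≤ m−1} be complex numbers, let a₀ be real, and let H := ∑_{1 ≤ |α| ≤ m−1} conj(a_α) S_α* + a₀ I + ∑_{1 ≤ |α| ≤ m−1} a_α S_α, a selfadjoint bounded operator on ℓ²(𝔽ₙ⁺). If ‖H‖ ≤ 1, then ∑_{k=0}^{m−1} (∑_{|α|=k} |a_α| r_α) ≤ 1 for every tuple r = (r₁,…,rₙ) of nonnegative reals with ‖r‖₂ ≤ γ_m, where γ_m ∈ (0,1) is the unique solution of f_m(t) = 1. -/

import Mathlib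

open scoped BigOperators

/-- The full Fock space, identified with `ℓ²(𝔽ₙ⁺)` where the free monoid `𝔽ₙ⁺` on `n`
generators is identified with `List (Fin n)`. -/
noncomputable abbrev Fock (n : ℕ) : Type := lp (fun _ : List (Fin n) => ℂ) 2

/-- The orthonormal basis vector `e_α` of the Fock space. -/
noncomputable def fockBasis (n : ℕ) (α : List (Fin n)) : Fock n := lp.single 2 α 1

/-- For a word `α = g_{i₁} ⋯ g_{i_k}`, the product `T_α = T_{i₁} ⋯ T_{i_k}` (and `T_{g₀} = 1`). -/
noncomputable def wordProd {n : ℕ} {M : Type*} [Monoid M] (T : Fin n → M)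
    (α : List (Fin n)) : M :=
  (α.map T).prod

/-- `fm m t = ∑_{k=1}^{m-1} t^k * cos (π / (⌊(m-1)/k⌋ + 2))`. -/
noncomputable def fm (m : ℕ) (t : ℝ) : ℝ :=
  ∑ k ∈ Finset.Icc 1 (m - 1), t ^ k * Real.cos (Real.pi / (((m - 1) / k + 2 : ℕ) : ℝ))

/-!
The matrix of `H` in the basis `(e_α)` is multi-Toeplitz, so `R* H R = H` for right multiplication
`R` by any unit vector `c` homogeneous of degree `k`. The vectors `R^j e_∅` are orthonormal, of
degrees `0, k, 2k, …`, and compress `H` to a selfadjoint Toeplitz matrix of bandwidth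
`N = ⌊(m - 1) / k⌋`. Its symbol is a trigonometric polynomial of degree `N` with values in
`[-1, 1]`, constant coefficient `a₀` and first coefficient `⟪c, (a_α)_{|α| = k}⟫`. Fejér's
inequality for nonnegative trigonometric polynomials, applied to `1 ±` the symbol and optimized
over `c`, gives `(∑_{|α| = k} |a_α|²)^{1/2} ≤ (1 - |a₀|) cos (π / (N + 2))`. By Cauchy–Schwarz and
`∑_{|α| = k} r_α² = ‖r‖₂^{2k}`, the sum in question is at most `|a₀| + (1 - |a₀|) f_m(γ) = 1`.
-/

section General

open scoped InnerProductSpace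

theorem norm_le_of_forall_re_inner_le {𝕜 E : Type*} [RCLike 𝕜] [NormedAddCommGroup E]
    [InnerProductSpace 𝕜 E] {x : E} {B : ℝ} (hB : 0 ≤ B)
    (h : ∀ c : E, ‖c‖ = 1 → RCLike.re ⟪c, x⟫_𝕜 ≤ B) : ‖x‖ ≤ B := by
  rcases eq_or_ne x 0 with rfl | hx
  · rwa [norm_zero]
  have hx' : ‖x‖ ≠ 0 := norm_ne_zero_iff.2 hx
  convert h ((‖x‖⁻¹ : 𝕜) • x) (by simp [norm_smul, hx'])
  rw [← RCLike.ofReal_inv, inner_smul_left, RCLike.conj_ofReal, RCLike.re_ofReal_mul,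
    inner_self_eq_norm_sq]
  field_simp

theorem ext_inner_hilbertBasis {ι 𝕜 E : Type*} [RCLike 𝕜] [NormedAddCommGroup E]
    [InnerProductSpace 𝕜 E] (b : HilbertBasis ι 𝕜 E) {T T' : E →L[𝕜] E}
    (h : ∀ i j, ⟪b i, T (b j)⟫_𝕜 = ⟪b i, T' (b j)⟫_𝕜) : T = T' := by
  have hdense := Submodule.dense_iff_topologicalClosure_eq_top.2 b.dense_span
  refine ContinuousLinearMap.ext_on hdense ?_
  rintro _ ⟨j, rfl⟩
  refine b.repr.injective (lp.ext <| funext fun i => ?_)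
  rw [b.repr_apply_apply, b.repr_apply_apply, h]

theorem sum_ofFn_ite_eq {ι R : Type*} [Fintype ι] [DecidableEq ι] [AddCommMonoid R]
    (f : List ι → R) (k : ℕ) (α : List ι) :
    (∑ w : Fin k → ι, if α = List.ofFn w then f (List.ofFn w) else 0) =
      if α.length = k then f α else 0 := by
  split_ifs with h
  · subst h
    rw [Finset.sum_eq_single α.get]
    · simp
    · rintro w - hw
      exact if_neg fun h => hw (List.ofFn_injective (by rw [← h, List.ofFn_get]))
    · simp
  · refine Finset.sum_eq_zero fun w _ => if_neg ?_
    rintro rfl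
    exact h List.length_ofFn

end General

section Fejer

open Finset

/-- The Laurent polynomial `∑_{|l| ≤ N} t_l z^l` as a function of `z`. -/
noncomputable def laurentSum {K : Type*} [Field K] (N : ℕ) (t : ℤ → K) (z : K) : K :=
  ∑ l ∈ Icc (-N : ℤ) N, t l * z ^ l

theorem sum_zpow_pow_eq_zero {K : Type*} [Field K] {ω : K} {M : ℕ} (hω : IsPrimitiveRoot ω M)
    {l : ℤ} (hl : ¬ (M : ℤ) ∣ l) : ∑ s ∈ range M, (ω ^ l) ^ s = 0 := by
  have hne : ω ^ l ≠ 1 := mt (hω.zpow_eq_one_iff_dvd l).1 hl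
  rw [geom_sum_eq hne, ← zpow_natCast, zpow_comm, hω.zpow_eq_one, one_zpow, sub_self, zero_div]

theorem sum_laurentSum_mul_zpow_neg {K : Type*} [Field K] {ω η : K} {M N : ℕ}
    (hω : IsPrimitiveRoot ω M) (hη : η ≠ 0) (t : ℤ → K) {j : ℤ} (hj : |j| ≤ N)
    (hM : N + |j| < M) :
    ∑ s ∈ range M, laurentSum N t (η * ω ^ s) * (η * ω ^ s) ^ (-j) = M * t j := by
  have hω0 : ω ≠ 0 := hω.ne_zero (by have := abs_nonneg j; omega)
  have hterm (s : ℕ) : laurentSum N t (η * ω ^ s) * (η * ω ^ s) ^ (-j) =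
      ∑ l ∈ Icc (-N : ℤ) N, t l * η ^ (l - j) * (ω ^ (l - j)) ^ s := by
    rw [laurentSum, sum_mul]
    refine sum_congr rfl fun l _ => ?_
    rw [mul_assoc, ← zpow_add₀ (by positivity), ← sub_eq_add_neg, mul_zpow, mul_assoc,
      ← zpow_natCast, ← zpow_natCast, zpow_comm]
  simp_rw [hterm]
  rw [sum_comm, sum_eq_single_of_mem j (mem_Icc.2 (abs_le.1 hj))]
  · simp [mul_comm]
  · intro l hl hlj
    rw [mem_Icc] at hl
    rw [← mul_sum, sum_zpow_pow_eq_zero hω, mul_zero]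
    refine fun hdvd => hlj (sub_eq_zero.1 (Int.eq_zero_of_abs_lt_dvd hdvd ?_))
    grind

theorem cos_odd_mul_pi_div_le {M s : ℕ} (hs : s < M) :
    Real.cos ((2 * s + 1) * (Real.pi / M)) ≤ Real.cos (Real.pi / M) := by
  have hM : (0 : ℝ) < M := by exact_mod_cast (Nat.zero_le s).trans_lt hs
  have hsM : (s : ℝ) + 1 ≤ M := by exact_mod_cast hs
  have hδ : 0 < Real.pi / M := div_pos Real.pi_pos hM
  have hMδ : M * (Real.pi / M) = Real.pi := mul_div_cancel₀ _ hM.ne'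
  rcases le_total ((2 * s + 1) * (Real.pi / M)) Real.pi with hle | hge
  · refine Real.cos_le_cos_of_nonneg_of_le_pi hδ.le hle ?_
    nlinarith [(Nat.cast_nonneg s : (0 : ℝ) ≤ s)]
  · rw [← Real.cos_two_pi_sub]
    refine Real.cos_le_cos_of_nonneg_of_le_pi hδ.le (by linarith) ?_
    nlinarith

theorem re_mul_re_of_norm_eq_one {z : ℂ} (hz : ‖z‖ = 1) (p : ℂ) :
    z.re * p.re = (p * z ^ (-1 : ℤ) + p * z ^ (1 : ℤ)).re / 2 := by
  rw [zpow_neg_one, zpow_one, Complex.inv_eq_conj hz]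
  simp only [Complex.add_re, Complex.mul_re, Complex.conj_re, Complex.conj_im]
  ring

theorem sum_re_mul_re_laurentSum {ω η : ℂ} {M N : ℕ} (hω : IsPrimitiveRoot ω M) (hη : ‖η‖ = 1)
    (hN : 1 ≤ N) (hM : N + 1 < M) (t : ℤ → ℂ) :
    ∑ s ∈ range M, (η * ω ^ s).re * (laurentSum N t (η * ω ^ s)).re =
      M * ((t 1 + t (-1)).re / 2) := by
  have hη0 : η ≠ 0 := norm_ne_zero_iff.1 (by rw [hη]; exact one_ne_zero)
  have hnorm (s : ℕ) : ‖η * ω ^ s‖ = 1 := by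
    rw [norm_mul, norm_pow, hη, hω.norm'_eq_one (by omega), one_pow, one_mul]
  have hpos := sum_laurentSum_mul_zpow_neg hω hη0 t (j := 1) (N := N) (by simpa) (by simp; omega)
  have hneg := sum_laurentSum_mul_zpow_neg hω hη0 t (j := -1) (N := N) (by simpa) (by simp; omega)
  rw [neg_neg] at hneg
  simp_rw [re_mul_re_of_norm_eq_one (hnorm _)]
  rw [← sum_div, ← Complex.re_sum, sum_add_distrib, hpos, hneg, ← mul_add,
    ← Complex.ofReal_natCast, Complex.re_ofReal_mul, mul_div_assoc]

/-- Fejér's inequality, by quadrature at the `M`-th roots of `-1` with `M = N + 2`: the weight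
`cos (π / M) - Re z` is nonnegative at these nodes. -/
theorem re_coeff_one_le_of_laurentSum_nonneg {N : ℕ} (hN : 1 ≤ N) {t : ℤ → ℂ}
    (ht : ∀ z : ℂ, ‖z‖ = 1 → 0 ≤ (laurentSum N t z).re) :
    (t 1 + t (-1)).re / 2 ≤ (t 0).re * Real.cos (Real.pi / (N + 2 : ℕ)) := by
  set M := N + 2
  set ω := Complex.exp (2 * Real.pi * Complex.I / M)
  set η := Complex.exp ((Real.pi / M : ℝ) * Complex.I)
  have hω : IsPrimitiveRoot ω M := Complex.isPrimitiveRoot_exp M (by omega)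
  have hη : ‖η‖ = 1 := Complex.norm_exp_ofReal_mul_I _
  have hnode (s : ℕ) : η * ω ^ s =
      Complex.exp (((2 * s + 1) * (Real.pi / M) : ℝ) * Complex.I) := by
    rw [← Complex.exp_nat_mul, ← Complex.exp_add]
    congr 1
    push_cast
    ring
  have hnorm (s : ℕ) : ‖η * ω ^ s‖ = 1 := by rw [hnode, Complex.norm_exp_ofReal_mul_I]
  have hre (s : ℕ) : (η * ω ^ s).re = Real.cos ((2 * s + 1) * (Real.pi / M)) := by
    rw [hnode, Complex.exp_ofReal_mul_I_re]
  have hmean : ∑ s ∈ range M, (laurentSum N t (η * ω ^ s)).re = M * (t 0).re := by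
    have hη0 : η ≠ 0 := Complex.exp_ne_zero _
    have := sum_laurentSum_mul_zpow_neg (M := M) hω hη0 t (j := 0) (N := N) (by simp) (by simp [M])
    simpa using congrArg Complex.re this
  have hcos := sum_re_mul_re_laurentSum hω hη hN (Nat.lt_succ_self (N + 1)) t
  have hweighted : 0 ≤ ∑ s ∈ range M,
      (Real.cos (Real.pi / M) - (η * ω ^ s).re) * (laurentSum N t (η * ω ^ s)).re := by
    refine sum_nonneg fun s hs => mul_nonneg ?_ (ht _ (hnorm s))
    rw [hre, sub_nonneg]
    exact cos_odd_mul_pi_div_le (mem_range.1 hs)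
  simp_rw [sub_mul] at hweighted
  rw [sum_sub_distrib, ← mul_sum, hmean, hcos] at hweighted
  have hM : (0 : ℝ) < M := by positivity
  nlinarith

theorem re_coeff_one_le_of_norm_laurentSum_le_one {N : ℕ} (hN : 1 ≤ N) {t : ℤ → ℂ}
    (ht : ∀ z : ℂ, ‖z‖ = 1 → ‖laurentSum N t z‖ ≤ 1) :
    (t 1 + t (-1)).re / 2 ≤ (1 - |(t 0).re|) * Real.cos (Real.pi / (N + 2 : ℕ)) := by
  have hone (u : ℤ → ℂ) (z : ℂ) : laurentSum N (Pi.single 0 1 + u) z = 1 + laurentSum N u z := by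
    simp [laurentSum, add_mul, sum_add_distrib, Pi.single_apply]
  have hplus := re_coeff_one_le_of_laurentSum_nonneg hN (t := Pi.single 0 1 + t) fun z hz => by
    rw [hone, Complex.add_re, Complex.one_re]
    linarith [(abs_le.1 ((Complex.abs_re_le_norm _).trans (ht z hz))).1]
  have hminus := re_coeff_one_le_of_laurentSum_nonneg hN
      (t := Pi.single 0 1 + fun l => -((-1) ^ l * t l)) fun z hz => by
    have hflip : laurentSum N (fun l => -((-1) ^ l * t l)) z = -laurentSum N t (-z) := by
      rw [laurentSum, laurentSum, ← sum_neg_distrib]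
      refine sum_congr rfl fun l _ => ?_
      rw [neg_eq_neg_one_mul z, mul_zpow]
      ring
    rw [hone, hflip, Complex.add_re, Complex.one_re, Complex.neg_re]
    linarith [(abs_le.1 ((Complex.abs_re_le_norm _).trans (ht (-z) (by rwa [norm_neg])))).2]
  rcases abs_cases (t 0).re with ⟨h, _⟩ | ⟨h, _⟩ <;> rw [h]
  · simpa [sub_eq_add_neg] using hminus
  · simpa using hplus

end Fejer

section Toeplitz

open Finset Filter Topology
open scoped InnerProductSpace

variable {E : Type*} [NormedAddCommGroup E] [InnerProductSpace ℂ E]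

theorem card_filter_sub_eq (L : ℕ) (l : ℤ) :
    #{p ∈ range L ×ˢ range L | (p.2 : ℤ) - p.1 = l} = L - l.natAbs := by
  rw [← card_range (L - l.natAbs)]
  refine card_bij' (fun p _ => min p.1 p.2) (fun s _ => (s + (-l).toNat, s + l.toNat))
    ?_ ?_ ?_ ?_ <;>
    simp only [mem_filter, mem_product, mem_range, Prod.forall, Prod.mk.injEq] <;> omega

/-- The vector `∑_{j < L} z^{-j} v_j`; the quadratic form of a Toeplitz operator at it is, for
`‖z‖ = 1`, `L` times a Cesàro mean of the symbol at `z`. -/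
noncomputable def geomVector (v : ℕ → E) (z : ℂ) (L : ℕ) : E :=
  ∑ j ∈ range L, z ^ (-j : ℤ) • v j

theorem norm_geomVector_sq {v : ℕ → E} (hv : Orthonormal ℂ v) {z : ℂ} (hz : ‖z‖ = 1) (L : ℕ) :
    ‖geomVector v z L‖ ^ 2 = L := by
  simpa [geomVector, hz] using hv.orthogonalFamily.norm_sum (fun j : ℕ => z ^ (-j : ℤ)) (range L)

theorem inner_geomVector_map_geomVector {v : ℕ → E} {H : E →L[ℂ] E} {N : ℕ} {t : ℤ → ℂ}
    (ht : ∀ i j : ℕ, ⟪v j, H (v i)⟫_ℂ = t (j - i)) (hN : ∀ l : ℤ, N < |l| → t l = 0)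
    {z : ℂ} (hz : ‖z‖ = 1) (L : ℕ) :
    ⟪geomVector v z L, H (geomVector v z L)⟫_ℂ =
      laurentSum N (fun l => (L - l.natAbs : ℕ) * t l) z := by
  have hz0 : z ≠ 0 := norm_ne_zero_iff.1 (by rw [hz]; exact one_ne_zero)
  have hentry (i j : ℕ) : ⟪z ^ (-j : ℤ) • v j, H (z ^ (-i : ℤ) • v i)⟫_ℂ =
      t (j - i) * z ^ (j - i : ℤ) := by
    rw [map_smul, inner_smul_left, inner_smul_right, ht, map_zpow₀, ← Complex.inv_eq_conj hz,
      inv_zpow, ← zpow_neg, neg_neg, sub_eq_add_neg (j : ℤ), zpow_add₀ hz0]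
    ring
  calc ⟪geomVector v z L, H (geomVector v z L)⟫_ℂ
      = ∑ p ∈ range L ×ˢ range L, t (p.2 - p.1) * z ^ (p.2 - p.1 : ℤ) := by
        simp_rw [geomVector, map_sum, inner_sum, sum_inner, hentry, sum_product]
    _ = ∑ p ∈ range L ×ˢ range L with (p.2 - p.1 : ℤ) ∈ Icc (-N : ℤ) N,
          t (p.2 - p.1) * z ^ (p.2 - p.1 : ℤ) := by
        refine (sum_filter_of_ne fun p _ hp => ?_).symm
        contrapose! hp
        rw [hN _ (not_le.1 (mt (fun h => mem_Icc.2 (abs_le.1 h)) hp)), zero_mul]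
    _ = ∑ l ∈ Icc (-N : ℤ) N, ∑ p ∈ range L ×ˢ range L with (p.2 - p.1 : ℤ) = l,
          t l * z ^ l :=
        (sum_fiberwise_eq_sum_filter' _ _ _ fun l => t l * z ^ l).symm
    _ = laurentSum N (fun l => (L - l.natAbs : ℕ) * t l) z := by
        simp_rw [sum_const, card_filter_sub_eq, nsmul_eq_mul, laurentSum, mul_assoc]

theorem norm_laurentSum_le_of_toeplitz {v : ℕ → E} (hv : Orthonormal ℂ v) {H : E →L[ℂ] E} {N : ℕ}
    {t : ℤ → ℂ} (ht : ∀ i j : ℕ, ⟪v j, H (v i)⟫_ℂ = t (j - i)) (hN : ∀ l : ℤ, N < |l| → t l = 0)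
    {z : ℂ} (hz : ‖z‖ = 1) : ‖laurentSum N t z‖ ≤ ‖H‖ := by
  have hbound (L : ℕ) : ‖laurentSum N (fun l => (L - l.natAbs : ℕ) * t l) z‖ ≤ ‖H‖ * L := by
    rw [← inner_geomVector_map_geomVector ht hN hz, ← norm_geomVector_sq hv hz L]
    calc ‖⟪geomVector v z L, H (geomVector v z L)⟫_ℂ‖
        ≤ ‖geomVector v z L‖ * (‖H‖ * ‖geomVector v z L‖) := by
          grw [norm_inner_le_norm, H.le_opNorm]
      _ = ‖H‖ * ‖geomVector v z L‖ ^ 2 := by ring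
  have hweight (l : ℤ) : Tendsto (fun L : ℕ => ((L - l.natAbs : ℕ) : ℂ) / L) atTop (𝓝 1) := by
    have hsub : Tendsto (fun L : ℕ => 1 - (l.natAbs : ℂ) / L) atTop (𝓝 (1 - 0)) :=
      tendsto_const_nhds.sub (tendsto_const_div_atTop_nhds_zero_nat (l.natAbs : ℂ))
    rw [sub_zero] at hsub
    refine hsub.congr' ?_
    filter_upwards [eventually_gt_atTop 0, eventually_ge_atTop l.natAbs] with L hL hlL
    rw [Nat.cast_sub hlL, sub_div, div_self (by exact_mod_cast hL.ne')]
  have hlim : Tendsto (fun L : ℕ => laurentSum N (fun l => (L - l.natAbs : ℕ) * t l) z / L) atTop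
      (𝓝 (laurentSum N t z)) := by
    simp_rw [laurentSum, sum_div]
    refine tendsto_finsetSum _ fun l _ => ?_
    simpa [mul_div_right_comm] using ((hweight l).mul_const (t l)).mul_const (z ^ l)
  refine le_of_tendsto hlim.norm ?_
  filter_upwards [eventually_gt_atTop 0] with L hL
  rw [norm_div, Complex.norm_natCast, div_le_iff₀ (by exact_mod_cast hL)]
  exact hbound L

theorem inner_iterate_map_iterate_eq {R : E → E} {H : E →L[ℂ] E}
    (hR : ∀ x y, ⟪R x, H (R y)⟫_ℂ = ⟪x, H y⟫_ℂ) (e : E) (i j : ℕ) :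
    ⟪R^[j] e, H (R^[i] e)⟫_ℂ =
      ⟪R^[(j - i : ℤ).toNat] e, H (R^[(-(j - i : ℤ)).toNat] e)⟫_ℂ := by
  have hshift (s p q : ℕ) : ⟪R^[q + s] e, H (R^[p + s] e)⟫_ℂ = ⟪R^[q] e, H (R^[p] e)⟫_ℂ := by
    induction s with
    | zero => rfl
    | succ s ih => rw [← add_assoc, ← add_assoc, Function.iterate_succ_apply',
        Function.iterate_succ_apply', hR, ih]
  conv_rhs => rw [← hshift (min i j)]
  congr 3 <;> omega

/-- The orbit of `e` under `R` compresses `H` to a Toeplitz matrix of bandwidth `N`, to whose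
symbol Fejér's inequality applies. -/
theorem re_inner_map_le_of_toeplitz [CompleteSpace E] {R : E → E} {H : E →L[ℂ] E}
    (hsa : IsSelfAdjoint H) (hnorm : ‖H‖ ≤ 1)
    (hR : ∀ x y, ⟪R x, H (R y)⟫_ℂ = ⟪x, H y⟫_ℂ)
    {e : E} (he : Orthonormal ℂ fun j => R^[j] e) {N : ℕ} (hN : 1 ≤ N)
    (hdeg : ∀ l, N < l → ⟪R^[l] e, H e⟫_ℂ = 0) :
    (⟪R e, H e⟫_ℂ).re ≤ (1 - |(⟪e, H e⟫_ℂ).re|) * Real.cos (Real.pi / (N + 2 : ℕ)) := by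
  set t : ℤ → ℂ := fun l => ⟪R^[l.toNat] e, H (R^[(-l).toNat] e)⟫_ℂ with ht
  have hconj (l : ℤ) : t (-l) = (starRingEnd ℂ) (t l) := by
    simp only [ht, neg_neg]
    rw [inner_conj_symm, ← ContinuousLinearMap.coe_coe, hsa.isSymmetric]
  have hband (l : ℤ) (hl : N < |l|) : t l = 0 := by
    have hpos (l : ℤ) (hl : N < l) : t l = 0 := by
      simpa [ht, Int.toNat_of_nonpos (show -l ≤ 0 by omega)] using hdeg l.toNat (by omega)
    rcases lt_abs.1 hl with hl | hl
    · exact hpos l hl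
    · rw [← neg_neg l, hconj, hpos _ hl, map_zero]
  have hfejer := re_coeff_one_le_of_norm_laurentSum_le_one hN fun z hz =>
    (norm_laurentSum_le_of_toeplitz he (inner_iterate_map_iterate_eq hR e) hband hz).trans hnorm
  have hone : (t 1 + t (-1)).re / 2 = (⟪R e, H e⟫_ℂ).re := by
    rw [hconj, Complex.add_re, Complex.conj_re, add_self_div_two]
    rfl
  rw [← hone]
  exact hfejer

end Toeplitz

section Fock

open scoped InnerProductSpace

/-- The standard Hilbert basis `(e_α)` of the Fock space. -/
noncomputable def fockHilbertBasis (n : ℕ) : HilbertBasis (List (Fin n)) ℂ (Fock n) :=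
  ⟨.refl ℂ (Fock n)⟩

theorem coe_fockHilbertBasis (n : ℕ) : ⇑(fockHilbertBasis n) = fockBasis n := by
  funext α
  rw [← HilbertBasis.repr_symm_single]
  rfl

theorem orthonormal_fockBasis (n : ℕ) : Orthonormal ℂ (fockBasis n) :=
  coe_fockHilbertBasis n ▸ (fockHilbertBasis n).orthonormal

theorem inner_fockBasis_left {n : ℕ} (α : List (Fin n)) (f : Fock n) :
    ⟪fockBasis n α, f⟫_ℂ = f α := by
  simp [fockBasis, lp.inner_single_left]

theorem inner_fockBasis {n : ℕ} (α β : List (Fin n)) :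
    ⟪fockBasis n α, fockBasis n β⟫_ℂ = if α = β then 1 else 0 :=
  orthonormal_iff_ite.1 (orthonormal_fockBasis n) α β

variable {n : ℕ}

/-- The multi-Toeplitz operators on the Fock space: those whose matrix entries are unchanged when
the same letter is appended on the right to both words, and vanish when the words end in different
letters. -/
def multiToeplitz (n : ℕ) : Submodule ℂ (Fock n →L[ℂ] Fock n) where
  carrier := {H | ∀ i j α β, ⟪fockBasis n (α ++ [i]), H (fockBasis n (β ++ [j]))⟫_ℂ =
    if i = j then ⟪fockBasis n α, H (fockBasis n β)⟫_ℂ else 0}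
  zero_mem' := by simp
  add_mem' hH hK i j α β := by
    simp only [add_apply, inner_add_right, hH i j α β, hK i j α β]
    split_ifs <;> simp
  smul_mem' c H hH i j α β := by
    simp only [smul_apply, inner_smul_right, hH i j α β, mul_ite, mul_zero]

theorem adjoint_mem_multiToeplitz {H : Fock n →L[ℂ] Fock n} (hH : H ∈ multiToeplitz n) :
    ContinuousLinearMap.adjoint H ∈ multiToeplitz n := by
  intro i j α β
  rw [ContinuousLinearMap.adjoint_inner_right, ContinuousLinearMap.adjoint_inner_right,
    ← inner_conj_symm, hH j i β α, ← inner_conj_symm (H _)]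
  simp only [eq_comm (a := i), apply_ite (starRingEnd ℂ), map_zero]

theorem wordProd_fockBasis {S : Fin n → Fock n →L[ℂ] Fock n}
    (hS : ∀ (i : Fin n) (α : List (Fin n)), S i (fockBasis n α) = fockBasis n (i :: α))
    (α β : List (Fin n)) : wordProd S α (fockBasis n β) = fockBasis n (α ++ β) := by
  induction α with
  | nil => rfl
  | cons i α ih =>
    have hcons : wordProd S (i :: α) = S i * wordProd S α := by simp [wordProd]
    rw [hcons, mul_apply_eq_comp, ih, hS, List.cons_append]

theorem wordProd_mem_multiToeplitz {S : Fin n → Fock n →L[ℂ] Fock n}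
    (hS : ∀ (i : Fin n) (α : List (Fin n)), S i (fockBasis n α) = fockBasis n (i :: α))
    (γ : List (Fin n)) : wordProd S γ ∈ multiToeplitz n := by
  intro i j α β
  rw [wordProd_fockBasis hS, wordProd_fockBasis hS, inner_fockBasis, inner_fockBasis,
    ← List.append_assoc]
  simp only [← List.concat_eq_append, List.concat_inj, ite_and]
  split_ifs <;> rfl

theorem one_mem_multiToeplitz : (1 : Fock n →L[ℂ] Fock n) ∈ multiToeplitz n := by
  intro i j α β
  simp only [one_apply_eq_self, inner_fockBasis, ← List.concat_eq_append, List.concat_inj, ite_and]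
  split_ifs <;> rfl

theorem inner_append_map_append {H : Fock n →L[ℂ] Fock n} (hH : H ∈ multiToeplitz n)
    (α β : List (Fin n)) {v w : List (Fin n)} (hvw : v.length = w.length) :
    ⟪fockBasis n (α ++ v), H (fockBasis n (β ++ w))⟫_ℂ =
      if v = w then ⟪fockBasis n α, H (fockBasis n β)⟫_ℂ else 0 := by
  induction v using List.reverseRecOn generalizing w with
  | nil => simp [List.length_eq_zero_iff.1 hvw.symm]
  | append_singleton v i ih =>
    obtain ⟨w, j, rfl⟩ : ∃ w' j, w = w' ++ [j] := by
      refine ⟨_, _, (List.dropLast_append_getLast (l := w) ?_).symm⟩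
      rintro rfl
      simp at hvw
    rw [← List.append_assoc, ← List.append_assoc, hH, ih (by simpa using hvw)]
    simp only [← List.concat_eq_append, List.concat_inj, ite_and]
    split_ifs <;> rfl

/-- The right product `∑_{|w| = k} c_w e_{αw}` of `e_α` by a vector `c` homogeneous of degree
`k`. -/
noncomputable def appendVector {k : ℕ} (c : EuclideanSpace ℂ (Fin k → Fin n))
    (α : List (Fin n)) : Fock n :=
  ∑ w, c w • fockBasis n (α ++ List.ofFn w)

theorem inner_appendVector_map_appendVector {H : Fock n →L[ℂ] Fock n} (hH : H ∈ multiToeplitz n)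
    {k : ℕ} {c : EuclideanSpace ℂ (Fin k → Fin n)} (hc : ‖c‖ = 1) (α β : List (Fin n)) :
    ⟪appendVector c α, H (appendVector c β)⟫_ℂ = ⟪fockBasis n α, H (fockBasis n β)⟫_ℂ := by
  have hcc : ∑ w, c w * (starRingEnd ℂ) (c w) = 1 := by
    simp_rw [Complex.mul_conj']
    exact_mod_cast (EuclideanSpace.norm_sq_eq c).symm.trans (by rw [hc, one_pow])
  calc ⟪appendVector c α, H (appendVector c β)⟫_ℂ
      = ∑ w, ∑ v, c w * ((starRingEnd ℂ) (c v) *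
          ⟪fockBasis n (α ++ List.ofFn v), H (fockBasis n (β ++ List.ofFn w))⟫_ℂ) := by
        simp only [appendVector, map_sum, map_smul, inner_sum, sum_inner, inner_smul_left,
          inner_smul_right, Finset.mul_sum]
    _ = ∑ w, c w * ((starRingEnd ℂ) (c w) * ⟪fockBasis n α, H (fockBasis n β)⟫_ℂ) := by
        simp [inner_append_map_append hH, List.ofFn_injective.eq_iff]
    _ = ⟪fockBasis n α, H (fockBasis n β)⟫_ℂ := by
        simp_rw [← mul_assoc, ← Finset.sum_mul, hcc, one_mul]

theorem orthonormal_appendVector {k : ℕ} {c : EuclideanSpace ℂ (Fin k → Fin n)} (hc : ‖c‖ = 1) :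
    Orthonormal ℂ (appendVector c) := by
  rw [orthonormal_iff_ite]
  intro α β
  simpa [inner_fockBasis] using
    inner_appendVector_map_appendVector one_mem_multiToeplitz hc α β

/-- Right multiplication by a unit vector homogeneous of degree `k`; it is isometric because words
of fixed length form a suffix code. -/
noncomputable def rightMul {k : ℕ} {c : EuclideanSpace ℂ (Fin k → Fin n)} (hc : ‖c‖ = 1) :
    Fock n →ₗᵢ[ℂ] Fock n :=
  (orthonormal_appendVector hc).orthogonalFamily.linearIsometry

theorem rightMul_fockBasis {k : ℕ} {c : EuclideanSpace ℂ (Fin k → Fin n)} (hc : ‖c‖ = 1)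
    (α : List (Fin n)) : rightMul hc (fockBasis n α) = appendVector c α := by
  rw [rightMul, fockBasis, OrthogonalFamily.linearIsometry_apply_single]
  simp

theorem inner_rightMul_map_rightMul {H : Fock n →L[ℂ] Fock n} (hH : H ∈ multiToeplitz n)
    {k : ℕ} {c : EuclideanSpace ℂ (Fin k → Fin n)} (hc : ‖c‖ = 1) (x y : Fock n) :
    ⟪rightMul hc x, H (rightMul hc y)⟫_ℂ = ⟪x, H y⟫_ℂ := by
  set R := (rightMul hc).toContinuousLinearMap
  have hRHR : ContinuousLinearMap.adjoint R * H * R = H := by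
    refine ext_inner_hilbertBasis (fockHilbertBasis n) fun α β => ?_
    simp only [coe_fockHilbertBasis, mul_apply_eq_comp,
      ContinuousLinearMap.adjoint_inner_right]
    change ⟪rightMul hc (fockBasis n α), H (rightMul hc (fockBasis n β))⟫_ℂ = _
    rw [rightMul_fockBasis, rightMul_fockBasis, inner_appendVector_map_appendVector hH hc]
  conv_rhs => rw [← hRHR]
  exact (ContinuousLinearMap.adjoint_inner_right R x _).symm

/-- The span of the vectors `e_α` with `|α| = d`. -/
noncomputable def homogeneous (n d : ℕ) : Submodule ℂ (Fock n) :=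
  Submodule.span ℂ (fockBasis n '' {α | α.length = d})

theorem fockBasis_mem_homogeneous (α : List (Fin n)) : fockBasis n α ∈ homogeneous n α.length :=
  Submodule.subset_span (Set.mem_image_of_mem _ rfl)

theorem inner_eq_zero_of_mem_homogeneous {d : ℕ} {x f : Fock n} (hx : x ∈ homogeneous n d)
    (hf : ∀ α : List (Fin n), α.length = d → f α = 0) : ⟪x, f⟫_ℂ = 0 := by
  have hle : homogeneous n d ≤ (ℂ ∙ f)ᗮ := by
    rw [homogeneous, Submodule.span_le]
    rintro _ ⟨α, hα, rfl⟩
    rw [SetLike.mem_coe, Submodule.mem_orthogonal_singleton_iff_inner_left, inner_fockBasis_left,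
      hf α hα]
  exact Submodule.mem_orthogonal_singleton_iff_inner_left.1 (hle hx)

theorem inner_homogeneous_homogeneous {p q : ℕ} (hpq : p ≠ q) {x y : Fock n}
    (hx : x ∈ homogeneous n p) (hy : y ∈ homogeneous n q) : ⟪x, y⟫_ℂ = 0 := by
  refine inner_eq_zero_of_mem_homogeneous hx fun α hα => ?_
  rw [← inner_fockBasis_left, inner_eq_zero_symm]
  refine inner_eq_zero_of_mem_homogeneous hy fun β hβ => ?_
  rw [← inner_fockBasis_left, inner_fockBasis, if_neg]
  rintro rfl
  exact hpq (hα.symm.trans hβ)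

theorem appendVector_mem_homogeneous {k : ℕ} (c : EuclideanSpace ℂ (Fin k → Fin n))
    (α : List (Fin n)) : appendVector c α ∈ homogeneous n (α.length + k) := by
  refine sum_mem fun w _ => Submodule.smul_mem _ _ ?_
  simpa using fockBasis_mem_homogeneous (α ++ List.ofFn w)

theorem rightMul_mem_homogeneous {k d : ℕ} {c : EuclideanSpace ℂ (Fin k → Fin n)} (hc : ‖c‖ = 1)
    {x : Fock n} (hx : x ∈ homogeneous n d) : rightMul hc x ∈ homogeneous n (d + k) := by
  have hle : homogeneous n d ≤ (homogeneous n (d + k)).comap (rightMul hc).toLinearMap := by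
    rw [homogeneous, Submodule.span_le]
    rintro _ ⟨α, rfl, rfl⟩
    change rightMul hc (fockBasis n α) ∈ homogeneous n (α.length + k)
    rw [rightMul_fockBasis]
    exact appendVector_mem_homogeneous c α
  exact hle hx

theorem iterate_rightMul_mem_homogeneous {k : ℕ} {c : EuclideanSpace ℂ (Fin k → Fin n)}
    (hc : ‖c‖ = 1) (l : ℕ) : (rightMul hc)^[l] (fockBasis n []) ∈ homogeneous n (l * k) := by
  induction l with
  | zero => simpa using fockBasis_mem_homogeneous ([] : List (Fin n))
  | succ l ih =>
    rw [Function.iterate_succ_apply', add_one_mul]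
    exact rightMul_mem_homogeneous hc ih

theorem orthonormal_iterate_rightMul {k : ℕ} (hk : 1 ≤ k)
    {c : EuclideanSpace ℂ (Fin k → Fin n)} (hc : ‖c‖ = 1) :
    Orthonormal ℂ fun l => (rightMul hc)^[l] (fockBasis n []) := by
  refine ⟨fun l => ?_, fun i j hij => ?_⟩
  · induction l with
    | zero => exact (orthonormal_fockBasis n).1 []
    | succ l ih => simpa only [Function.iterate_succ_apply', LinearIsometry.norm_map] using ih
  · exact inner_homogeneous_homogeneous (by simpa [Nat.one_le_iff_ne_zero.1 hk] using hij)
      (iterate_rightMul_mem_homogeneous hc i) (iterate_rightMul_mem_homogeneous hc j)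

/-- The coefficients `a_α` with `|α| = k`, as a vector with its `ℓ²` norm. -/
noncomputable def coeffVec (a : List (Fin n) → ℂ) (k : ℕ) : EuclideanSpace ℂ (Fin k → Fin n) :=
  WithLp.toLp 2 fun w => a (List.ofFn w)

theorem inner_appendVector_nil {k : ℕ} (c : EuclideanSpace ℂ (Fin k → Fin n)) (f : Fock n) :
    ⟪appendVector c [], f⟫_ℂ = ⟪c, coeffVec f k⟫_ℂ := by
  simp only [appendVector, List.nil_append, sum_inner, inner_smul_left, inner_fockBasis_left,
    PiLp.inner_apply, coeffVec, RCLike.inner_apply']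

/-- Pairing with a unit vector `c` reduces the bound to the Toeplitz compression of `H` along the
powers of right multiplication by `c`, which have degrees `0, k, 2k, …`. -/
theorem norm_coeffVec_le {H : Fock n →L[ℂ] Fock n} (hH : H ∈ multiToeplitz n)
    (hsa : IsSelfAdjoint H) (hnorm : ‖H‖ ≤ 1) {d k : ℕ}
    (hdeg : ∀ α : List (Fin n), d < α.length → H (fockBasis n []) α = 0)
    (hk : 1 ≤ k) (hkd : k ≤ d) :
    ‖coeffVec (H (fockBasis n [])) k‖ ≤
      (1 - |(H (fockBasis n []) []).re|) * Real.cos (Real.pi / (d / k + 2 : ℕ)) := by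
  set e := fockBasis n []
  have he : ‖e‖ = 1 := (orthonormal_fockBasis n).1 []
  have hdiag : |(H e []).re| ≤ 1 := by
    rw [← inner_fockBasis_left]
    calc |(⟪e, H e⟫_ℂ).re| ≤ ‖e‖ * (‖H‖ * ‖e‖) := by
          grw [Complex.abs_re_le_norm, norm_inner_le_norm, H.le_opNorm]
      _ ≤ 1 := by simpa [he] using hnorm
  have hcos : 0 ≤ Real.cos (Real.pi / (d / k + 2 : ℕ)) := by
    refine Real.cos_nonneg_of_mem_Icc ⟨?_, ?_⟩
    · linarith [Real.pi_pos, show 0 ≤ Real.pi / (d / k + 2 : ℕ) by positivity]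
    · gcongr
      exact_mod_cast Nat.le_add_left 2 (d / k)
  refine norm_le_of_forall_re_inner_le (𝕜 := ℂ) (mul_nonneg (sub_nonneg.2 hdiag) hcos)
    fun c hc => ?_
  rw [← inner_appendVector_nil, ← rightMul_fockBasis hc, ← inner_fockBasis_left []]
  refine re_inner_map_le_of_toeplitz hsa hnorm (inner_rightMul_map_rightMul hH hc)
    (orthonormal_iterate_rightMul hk hc) (Nat.div_pos hkd hk) fun l hl => ?_
  refine inner_eq_zero_of_mem_homogeneous (iterate_rightMul_mem_homogeneous hc l) fun α hα => ?_
  exact hdeg α (hα ▸ (Nat.div_lt_iff_lt_mul hk).1 hl)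

/-- The operator `∑_{1 ≤ |α| ≤ d} conj (a_α) S_α* + a₀ + ∑_{1 ≤ |α| ≤ d} a_α S_α`. -/
noncomputable def toeplitzPoly (S : Fin n → Fock n →L[ℂ] Fock n) (a : List (Fin n) → ℂ) (a0 : ℂ)
    (d : ℕ) : Fock n →L[ℂ] Fock n :=
  (∑ k ∈ Finset.Icc 1 d, ∑ w : Fin k → Fin n,
      (starRingEnd ℂ) (a (List.ofFn w)) •
        ContinuousLinearMap.adjoint (wordProd S (List.ofFn w)))
    + a0 • 1
    + ∑ k ∈ Finset.Icc 1 d, ∑ w : Fin k → Fin n, a (List.ofFn w) • wordProd S (List.ofFn w)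

theorem toeplitzPoly_mem_multiToeplitz {S : Fin n → Fock n →L[ℂ] Fock n}
    (hS : ∀ (i : Fin n) (α : List (Fin n)), S i (fockBasis n α) = fockBasis n (i :: α))
    (a : List (Fin n) → ℂ) (a0 : ℂ) (d : ℕ) :
    toeplitzPoly S a a0 d ∈ multiToeplitz n := by
  have hword (k : ℕ) (w : Fin k → Fin n) := wordProd_mem_multiToeplitz hS (List.ofFn w)
  refine add_mem (add_mem ?_ ?_) ?_
  · exact sum_mem fun k _ => sum_mem fun w _ =>
      Submodule.smul_mem _ _ (adjoint_mem_multiToeplitz (hword k w))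
  · exact Submodule.smul_mem _ _ one_mem_multiToeplitz
  · exact sum_mem fun k _ => sum_mem fun w _ => Submodule.smul_mem _ _ (hword k w)

theorem adjoint_wordProd_fockBasis_nil {S : Fin n → Fock n →L[ℂ] Fock n}
    (hS : ∀ (i : Fin n) (α : List (Fin n)), S i (fockBasis n α) = fockBasis n (i :: α))
    {α : List (Fin n)} (hα : α ≠ []) :
    ContinuousLinearMap.adjoint (wordProd S α) (fockBasis n []) = 0 := by
  ext β
  rw [← inner_fockBasis_left, ContinuousLinearMap.adjoint_inner_right, wordProd_fockBasis hS,
    inner_fockBasis, if_neg (by simp [hα])]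
  rfl

theorem toeplitzPoly_fockBasis_nil_apply {S : Fin n → Fock n →L[ℂ] Fock n}
    (hS : ∀ (i : Fin n) (α : List (Fin n)), S i (fockBasis n α) = fockBasis n (i :: α))
    (a : List (Fin n) → ℂ) (a0 : ℂ) (d : ℕ) (α : List (Fin n)) :
    toeplitzPoly S a a0 d (fockBasis n []) α =
      (if α = [] then a0 else 0) + if 1 ≤ α.length ∧ α.length ≤ d then a α else 0 := by
  have hadj : (∑ k ∈ Finset.Icc 1 d, ∑ w : Fin k → Fin n, (starRingEnd ℂ) (a (List.ofFn w)) •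
      ContinuousLinearMap.adjoint (wordProd S (List.ofFn w))) (fockBasis n []) = 0 := by
    simp only [sum_apply, smul_apply]
    refine Finset.sum_eq_zero fun k hk => Finset.sum_eq_zero fun w _ => ?_
    have hk1 := (Finset.mem_Icc.1 hk).1
    rw [adjoint_wordProd_fockBasis_nil hS (by rw [Ne, List.ofFn_eq_nil_iff]; omega), smul_zero]
  rw [← inner_fockBasis_left, toeplitzPoly, add_apply, add_apply, hadj, zero_add]
  simp only [sum_apply, smul_apply, one_apply_eq_self, inner_add_right, inner_sum,
    inner_smul_right, wordProd_fockBasis hS, List.append_nil, inner_fockBasis, mul_ite, mul_one,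
    mul_zero, sum_ofFn_ite_eq, Finset.sum_ite_eq, Finset.mem_Icc]

theorem sum_sq_wordProd_ofFn {R : Type*} [CommSemiring R] (r : Fin n → R) (k : ℕ) :
    ∑ w : Fin k → Fin n, wordProd r (List.ofFn w) ^ 2 = (∑ i, r i ^ 2) ^ k := by
  rw [Fintype.sum_pow]
  refine Finset.sum_congr rfl fun w _ => ?_
  rw [wordProd, List.map_ofFn, List.prod_ofFn, ← Finset.prod_pow]
  rfl

theorem sum_norm_mul_wordProd_le (a : List (Fin n) → ℂ) (r : Fin n → ℝ) (k : ℕ) :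
    ∑ w : Fin k → Fin n, ‖a (List.ofFn w)‖ * wordProd r (List.ofFn w) ≤
      ‖coeffVec a k‖ * √(∑ i, r i ^ 2) ^ k := by
  calc ∑ w : Fin k → Fin n, ‖a (List.ofFn w)‖ * wordProd r (List.ofFn w)
      ≤ √(∑ w : Fin k → Fin n, ‖a (List.ofFn w)‖ ^ 2) *
          √(∑ w : Fin k → Fin n, wordProd r (List.ofFn w) ^ 2) :=
        Real.sum_mul_le_sqrt_mul_sqrt _ _ _
    _ = ‖coeffVec a k‖ * √(∑ i, r i ^ 2) ^ k := by
        rw [sum_sq_wordProd_ofFn, EuclideanSpace.norm_eq, Real.sqrt_eq_rpow (_ ^ k),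
          ← Real.rpow_pow_comm (by positivity), ← Real.sqrt_eq_rpow]
        rfl

theorem norm_coeffVec_le_of_norm_toeplitzPoly_le_one {S : Fin n → Fock n →L[ℂ] Fock n}
    (hS : ∀ (i : Fin n) (α : List (Fin n)), S i (fockBasis n α) = fockBasis n (i :: α))
    {a : List (Fin n) → ℂ} {a0 : ℝ} {d k : ℕ} (hsa : IsSelfAdjoint (toeplitzPoly S a a0 d))
    (hnorm : ‖toeplitzPoly S a a0 d‖ ≤ 1) (hk : 1 ≤ k) (hkd : k ≤ d) :
    ‖coeffVec a k‖ ≤ (1 - |a0|) * Real.cos (Real.pi / (d / k + 2 : ℕ)) := by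
  have hcol := toeplitzPoly_fockBasis_nil_apply hS a a0 d
  have hcoeff : coeffVec (toeplitzPoly S a a0 d (fockBasis n [])) k = coeffVec a k := by
    ext w
    simp [coeffVec, hcol, hk, hkd, Nat.one_le_iff_ne_zero.1 hk]
  have hdeg (α : List (Fin n)) (hα : d < α.length) :
      toeplitzPoly S a a0 d (fockBasis n []) α = 0 := by
    rw [hcol, if_neg (by rintro rfl; simp at hα), if_neg (by omega), add_zero]
  simpa [hcoeff, hcol] using
    norm_coeffVec_le (toeplitzPoly_mem_multiToeplitz hS a a0 d) hsa hnorm hdeg hk hkd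

theorem abs_add_sum_le_of_norm_toeplitzPoly_le_one {S : Fin n → Fock n →L[ℂ] Fock n}
    (hS : ∀ (i : Fin n) (α : List (Fin n)), S i (fockBasis n α) = fockBasis n (i :: α))
    {a : List (Fin n) → ℂ} {a0 : ℝ} {m : ℕ} (hsa : IsSelfAdjoint (toeplitzPoly S a a0 (m - 1)))
    (hnorm : ‖toeplitzPoly S a a0 (m - 1)‖ ≤ 1) {r : Fin n → ℝ} {γ : ℝ}
    (hr : √(∑ i, r i ^ 2) ≤ γ) :
    |a0| + ∑ k ∈ Finset.Icc 1 (m - 1), ∑ w : Fin k → Fin n,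
        ‖a (List.ofFn w)‖ * wordProd r (List.ofFn w) ≤ |a0| + (1 - |a0|) * fm m γ := by
  rw [fm, Finset.mul_sum]
  gcongr with k hk
  obtain ⟨hk, hkm⟩ := Finset.mem_Icc.1 hk
  have hγ : 0 ≤ γ := (Real.sqrt_nonneg _).trans hr
  calc ∑ w : Fin k → Fin n, ‖a (List.ofFn w)‖ * wordProd r (List.ofFn w)
      ≤ ‖coeffVec a k‖ * √(∑ i, r i ^ 2) ^ k := sum_norm_mul_wordProd_le a r k
    _ ≤ (1 - |a0|) * Real.cos (Real.pi / ((m - 1) / k + 2 : ℕ)) * γ ^ k := by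
        grw [hr, norm_coeffVec_le_of_norm_toeplitzPoly_le_one hS hsa hnorm hk hkm]
    _ = (1 - |a0|) * (γ ^ k * Real.cos (Real.pi / ((m - 1) / k + 2 : ℕ))) := by ring

end Fock

theorem stmt_16 (n : ℕ) (hn : 1 ≤ n) (m : ℕ) (hm : 3 ≤ m)
    (a : List (Fin n) → ℂ) (a0 : ℝ)
    (S : Fin n → Fock n →L[ℂ] Fock n)
    (hS : ∀ (i : Fin n) (α : List (Fin n)), S i (fockBasis n α) = fockBasis n (i :: α))
    (H : Fock n →L[ℂ] Fock n)
    (hH : H = (∑ k ∈ Finset.Icc 1 (m - 1), ∑ w : Fin k → Fin n,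
        ((starRingEnd ℂ) (a (List.ofFn w))) •
          ContinuousLinearMap.adjoint (wordProd S (List.ofFn w)))
      + (a0 : ℂ) • 1
      + ∑ k ∈ Finset.Icc 1 (m - 1), ∑ w : Fin k → Fin n,
          a (List.ofFn w) • wordProd S (List.ofFn w))
    (hsa : IsSelfAdjoint H) (hnorm : ‖H‖ ≤ 1)
    (γ : ℝ) (hγm : γ ∈ Set.Ioo (0 : ℝ) 1) (hγs : fm m γ = 1) :
    ∀ r : Fin n → ℝ, (∀ i, 0 ≤ r i) → Real.sqrt (∑ i, r i ^ 2) ≤ γ →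
      |a0| + ∑ k ∈ Finset.Icc 1 (m - 1), ∑ w : Fin k → Fin n,
        ‖a (List.ofFn w)‖ * wordProd r (List.ofFn w) ≤ 1 := by
  intro r _ hr
  obtain rfl : H = toeplitzPoly S a a0 (m - 1) := hH
  calc |a0| + ∑ k ∈ Finset.Icc 1 (m - 1), ∑ w : Fin k → Fin n,
        ‖a (List.ofFn w)‖ * wordProd r (List.ofFn w)
      ≤ |a0| + (1 - |a0|) * fm m γ :=
        abs_add_sum_le_of_norm_toeplitzPoly_le_one hS hsa hnorm hr
    _ = 1 := by rw [hγs, mul_one, add_sub_cancel]
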